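/- arXiv:2005.01926 — 5 statements merged into one kernel-verified Lean document; each statement's English description precedes it below -/
import Mathlib

section
/- Let 0 < a and t0 < T. Let rho : [t0,T] → [0,a] be measurable, let gamma : [t0,T] → [0,∞) be integrable, and let mu : [0,a] → [0,∞) be continuous, nondecreasing, and strictly positive on (0,a]. Suppose rho(t) ≤ ∫_{t0}^t gamma(s)·mu(rho(s)) ds for almost every t ∈ [t0,T], and suppose ∫_0^a dτ/mu(τ) = +∞ (the integral near 0 diverges). Then rho(t) = 0 for almost every t ∈ [t0,T]. -/
open MeasureTheory intervalIntegral

/-!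
Put `R t = ∫_{t0}^t γ μ(ρ)`, a continuous nondecreasing function with `R t0 = 0` and `ρ ≤ R` a.e.
Then `R t' - R t ≤ μ(R t') ∫_t^{t'} γ` for `t ≤ t'`, since `μ` and `R` are monotone. If `t'` is so
close to `t` that `μ(R t') ≤ 2 μ(R t)`, this gives
`∫_{R t}^{R t'} dτ/μ(τ) ≤ (R t' - R t) / μ(R t) ≤ 2 ∫_t^{t'} γ`.
Continuous induction in `t'` removes the closeness requirement (`osgood_integral_le`); the factor
`2` replaces the chain rule for absolutely continuous functions and is harmless. If `R` were
positive somewhere, it would take every small positive value, so `∫_x^c dτ/μ(τ)` would stay bounded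
as `x → 0`, against the divergence hypothesis. As `R` may exceed `a`, `μ` is extended to `ℝ` by
clamping its argument to `[0, a]`.
-/

/-- The integrated form of `R' ≤ γ m(R)`, with a loss of a factor `2`, for a modulus `m` defined on
the whole line and `R t = ∫_{t0}^t h`. -/
lemma osgood_integral_le {γ h m : ℝ → ℝ} {t0 s t : ℝ}
    (hγ : Integrable γ) (hh : Integrable h) (hγ0 : ∀ x, 0 ≤ γ x) (hh0 : ∀ x, 0 ≤ h x)
    (hmc : Continuous m) (hmm : Monotone m) (hmp : ∀ x, 0 < x → 0 < m x)
    (hle : ∀ᵐ u, t0 ≤ u → h u ≤ γ u * m (∫ v in t0..u, h v))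
    (hs : t0 ≤ s) (hst : s ≤ t) (hpos : 0 < ∫ v in t0..s, h v) :
    ∫ x in (∫ v in t0..s, h v)..(∫ v in t0..t, h v), 1 / m x ≤ 2 * ∫ u in s..t, γ u := by
  set R : ℝ → ℝ := fun t => ∫ v in t0..t, h v with hR
  have hRc : Continuous R := intervalIntegral.continuous_primitive
    (fun a b => hh.intervalIntegrable) t0
  have hRsub : ∀ x y, R y - R x = ∫ v in x..y, h v := fun x y =>
    integral_interval_sub_left hh.intervalIntegrable hh.intervalIntegrable
  have hRm : Monotone R := fun x y hxy => by
    have := intervalIntegral.integral_nonneg (μ := volume) hxy (fun u _ => hh0 u)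
    linarith [hRsub x y]
  change 0 < R s at hpos
  change ∫ x in R s..R t, 1 / m x ≤ _
  -- Freezing `m` below `R s` makes the integrand continuous on all of `ℝ`.
  set g : ℝ → ℝ := fun x => 1 / m (max x (R s)) with hg
  have hmgp : ∀ x, 0 < m (max x (R s)) := fun x => hmp _ (lt_max_of_lt_right hpos)
  have hgc : Continuous g := by
    refine continuous_const.div (hmc.comp (continuous_id.max continuous_const)) ?_
    exact fun x => (hmgp x).ne'
  have hGc : Continuous (fun y => ∫ x in R s..y, g x) :=
    intervalIntegral.continuous_primitive (fun a b => hgc.intervalIntegrable a b) _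
  have hΓc : Continuous (fun y => ∫ x in s..y, γ x) :=
    intervalIntegral.continuous_primitive (fun a b => hγ.intervalIntegrable) _
  have hstep : ∀ x y, s ≤ x → x ≤ y → m (R y) ≤ 2 * m (R x) →
      ∫ z in R x..R y, g z ≤ 2 * ∫ u in x..y, γ u := by
    intro x y hsx hxy h2
    have hmx : 0 < m (R x) := hmp _ (hpos.trans_le (hRm hsx))
    have hΓ0 : 0 ≤ ∫ u in x..y, γ u :=
      intervalIntegral.integral_nonneg (μ := volume) hxy (fun u _ => hγ0 u)
    have h1 : ∫ z in R x..R y, g z ≤ ∫ z in R x..R y, 1 / m (R x) := by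
      refine intervalIntegral.integral_mono_on (hRm hxy) (hgc.intervalIntegrable _ _)
        intervalIntegrable_const fun z hz => ?_
      exact one_div_le_one_div_of_le hmx (hmm (hz.1.trans (le_max_left _ _)))
    have h3 : R y - R x ≤ m (R y) * ∫ u in x..y, γ u := by
      rw [hRsub, ← intervalIntegral.integral_const_mul]
      refine intervalIntegral.integral_mono_ae_restrict hxy hh.intervalIntegrable
        (hγ.intervalIntegrable.const_mul _) ?_
      rw [Filter.EventuallyLE, ae_restrict_iff' measurableSet_Icc]
      filter_upwards [hle] with u hu hmem
      refine (hu (hs.trans (hsx.trans hmem.1))).trans ?_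
      rw [mul_comm]
      exact mul_le_mul_of_nonneg_right (hmm (hRm hmem.2)) (hγ0 u)
    rw [intervalIntegral.integral_const, smul_eq_mul, mul_one_div] at h1
    refine h1.trans ((div_le_iff₀ hmx).2 (h3.trans ?_))
    nlinarith [mul_le_mul_of_nonneg_right h2 hΓ0]
  have hcl : IsClosed ({y | ∫ z in R s..R y, g z ≤ 2 * ∫ u in s..y, γ u} ∩ Set.Icc s t) :=
    (isClosed_le (hGc.comp hRc) (continuous_const.mul hΓc)).inter isClosed_Icc
  have hind : Set.Icc s t ⊆ {y | ∫ z in R s..R y, g z ≤ 2 * ∫ u in s..y, γ u} := by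
    refine hcl.Icc_subset_of_forall_exists_gt (by simp) ?_
    rintro x ⟨hx, hxs⟩ y hy
    have hmx : 0 < m (R x) := hmp _ (hpos.trans_le (hRm hxs.1))
    have hnear : ∀ᶠ z in nhdsWithin x (Set.Ioi x), m (R z) < 2 * m (R x) :=
      ((hmc.comp hRc).continuousAt.eventually
        (gt_mem_nhds (by simp only [Function.comp]; linarith))).filter_mono nhdsWithin_le_nhds
    obtain ⟨z, hz, hzI⟩ := (hnear.and (Ioc_mem_nhdsGT (Set.mem_Ioi.1 hy))).exists
    refine ⟨z, ?_, hzI⟩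
    have hxz := hstep x z hxs.1 hzI.1.le hz.le
    have e1 := integral_add_adjacent_intervals (μ := volume)
      (hgc.intervalIntegrable (R s) (R x)) (hgc.intervalIntegrable (R x) (R z))
    have e2 := integral_add_adjacent_intervals (μ := volume)
      (hγ.intervalIntegrable (a := s) (b := x)) (hγ.intervalIntegrable (a := x) (b := z))
    simp only [Set.mem_ofPred_eq] at hx ⊢
    linarith
  have hfin := hind ⟨hst, le_rfl⟩
  refine le_of_eq_of_le (intervalIntegral.integral_congr fun x hx => ?_) hfin
  rw [Set.uIcc_of_le (hRm hst)] at hx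
  simp [hg, max_eq_left hx.1]

/-- Osgood lemma, second part (the case `c = 0`): if `∫_0^a dτ/μ(τ) = +∞`, then `ρ = 0` a.e. -/
theorem osgood_lemma_second_part
    (a t0 T : ℝ) (ha : 0 < a) (htT : t0 < T)
    (rho gamma mu : ℝ → ℝ)
    (hrho_meas : AEMeasurable rho (volume.restrict (Set.Icc t0 T)))
    (hrho_mem : ∀ t ∈ Set.Icc t0 T, rho t ∈ Set.Icc 0 a)
    (hgamma_int : IntegrableOn gamma (Set.Icc t0 T))
    (hgamma_nonneg : ∀ t ∈ Set.Icc t0 T, 0 ≤ gamma t)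
    (hmu_cont : ContinuousOn mu (Set.Icc 0 a))
    (hmu_mono : MonotoneOn mu (Set.Icc 0 a))
    (hmu_nonneg : ∀ x ∈ Set.Icc 0 a, 0 ≤ mu x)
    (hmu_pos : ∀ x ∈ Set.Ioc 0 a, 0 < mu x)
    (hineq : ∀ᵐ t ∂volume, t ∈ Set.Icc t0 T →
      rho t ≤ ∫ s in t0..t, gamma s * mu (rho s))
    (hdiv : ∫⁻ τ in Set.Ioc (0:ℝ) a, ENNReal.ofReal (1 / mu τ) = ⊤) :
    ∀ᵐ t ∂volume, t ∈ Set.Icc t0 T → rho t = 0 := by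
  set m : ℝ → ℝ := fun x => mu (max 0 (min x a)) with hm
  have hclamp : ∀ x, max 0 (min x a) ∈ Set.Icc 0 a := fun x =>
    ⟨le_max_left _ _, max_le ha.le (min_le_right _ _)⟩
  have hmc : Continuous m := hmu_cont.comp_continuous (by fun_prop) hclamp
  have hmm : Monotone m := fun x y hxy => hmu_mono (hclamp x) (hclamp y)
    (max_le_max le_rfl (min_le_min hxy le_rfl))
  have hmp : ∀ x, 0 < x → 0 < m x := fun x hx =>
    hmu_pos _ ⟨lt_max_of_lt_right (lt_min hx ha), (hclamp x).2⟩
  have hmeq : ∀ x ∈ Set.Icc 0 a, m x = mu x := fun x hx => by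
    simp [hm, min_eq_left hx.2, max_eq_right hx.1]
  set γ : ℝ → ℝ := (Set.Icc t0 T).indicator gamma with hγdef
  set h : ℝ → ℝ := (Set.Icc t0 T).indicator (fun s => gamma s * mu (rho s)) with hhdef
  have hγ : Integrable γ := (integrable_indicator_iff measurableSet_Icc).2 hgamma_int
  have hh : Integrable h := by
    refine (integrable_indicator_iff measurableSet_Icc).2 ?_
    have h1 : IntegrableOn (fun s => gamma s * m (rho s)) (Set.Icc t0 T) := by
      refine Integrable.mul_bdd (c := mu a) hgamma_int
        (hmc.measurable.comp_aemeasurable hrho_meas).aestronglyMeasurable ?_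
      refine Filter.Eventually.of_forall fun s => ?_
      rw [Real.norm_of_nonneg (hmu_nonneg _ (hclamp _))]
      exact hmu_mono (hclamp _) ⟨ha.le, le_rfl⟩ (hclamp _).2
    refine h1.congr_fun (fun s hs => ?_) measurableSet_Icc
    simp only [hmeq _ (hrho_mem s hs)]
  have hγ0 : ∀ x, 0 ≤ γ x := fun x => Set.indicator_nonneg hgamma_nonneg x
  have hh0 : ∀ x, 0 ≤ h x := fun x => Set.indicator_nonneg
    (fun s hs => mul_nonneg (hgamma_nonneg s hs) (hmu_nonneg _ (hrho_mem s hs))) x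
  set R : ℝ → ℝ := fun t => ∫ v in t0..t, h v with hR
  have hRc : Continuous R := intervalIntegral.continuous_primitive
    (fun a b => hh.intervalIntegrable) t0
  have hRt0 : R t0 = 0 := by simp [hR]
  have hρR : ∀ᵐ t, t ∈ Set.Icc t0 T → rho t ≤ R t := by
    filter_upwards [hineq] with t ht hmem
    refine (ht hmem).trans_eq (intervalIntegral.integral_congr fun s hs => ?_)
    rw [Set.uIcc_of_le hmem.1] at hs
    simp only [hhdef]
    rw [Set.indicator_of_mem (Set.mem_Icc.2 ⟨hs.1, hs.2.trans hmem.2⟩)]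
  have hle : ∀ᵐ u, t0 ≤ u → h u ≤ γ u * m (∫ v in t0..u, h v) := by
    filter_upwards [hρR] with u hu _
    by_cases hmem : u ∈ Set.Icc t0 T
    · simp only [hhdef, hγdef, Set.indicator_of_mem hmem]
      rw [← hmeq _ (hrho_mem u hmem)]
      exact mul_le_mul_of_nonneg_left (hmm (hu hmem)) (hgamma_nonneg u hmem)
    · simp [hhdef, hγdef, Set.indicator_of_notMem hmem]
  suffices hzero : ∀ t ∈ Set.Icc t0 T, R t ≤ 0 by
    filter_upwards [hρR] with t ht hmem
    exact le_antisymm ((ht hmem).trans (hzero t hmem)) (hrho_mem t hmem).1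
  intro t1 ht1
  by_contra! hRpos
  -- `c` is a value of `R` lying in `(0, a]`, so every `x ∈ (0, c]` is attained before it.
  set c := min (R t1) a with hc
  have hc0 : 0 < c := lt_min hRpos ha
  have hca : c ≤ a := min_le_right _ _
  obtain ⟨t2, ht2, hRt2⟩ : c ∈ R '' Set.Icc t0 t1 :=
    intermediate_value_Icc ht1.1 hRc.continuousOn ⟨hRt0.trans_le hc0.le, min_le_left _ _⟩
  have hbound : ∀ x, 0 < x → x ≤ c → ∫ y in x..c, 1 / m y ≤ 2 * ∫ u, γ u := by
    intro x hx hxc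
    obtain ⟨s, hs, hRs⟩ : x ∈ R '' Set.Icc t0 t2 :=
      intermediate_value_Icc ht2.1 hRc.continuousOn
        ⟨hRt0.trans_le hx.le, hxc.trans_eq hRt2.symm⟩
    have key := osgood_integral_le hγ hh hγ0 hh0 hmc hmm hmp hle hs.1 hs.2
      (hx.trans_eq hRs.symm)
    change ∫ y in R s..R t2, 1 / m y ≤ _ at key
    rw [hRs, hRt2] at key
    refine key.trans (mul_le_mul_of_nonneg_left ?_ zero_le_two)
    rw [intervalIntegral.integral_of_le hs.2]
    exact setIntegral_le_integral hγ (Filter.Eventually.of_forall hγ0)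
  have hcontOn : ∀ x, 0 < x → ContinuousOn (fun y => 1 / m y) (Set.Icc x a) := fun x hx =>
    continuousOn_const.div hmc.continuousOn fun y hy => (hmp y (hx.trans_le hy.1)).ne'
  have hintOn : ∀ x, 0 < x → IntegrableOn (fun y => 1 / m y) (Set.Ioc x a) := fun x hx =>
    (hcontOn x hx).integrableOn_Icc.mono_set Set.Ioc_subset_Icc_self
  have hint0c : IntegrableOn (fun y => 1 / m y) (Set.Ioc 0 c) := by
    have hxpos : ∀ n : ℕ, 0 < c * (1 / ((n : ℝ) + 1)) := fun n => by positivity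
    have hxle : ∀ n : ℕ, c * (1 / ((n : ℝ) + 1)) ≤ c := fun n =>
      mul_le_of_le_one_right hc0.le
        ((div_le_one (by positivity)).2 (by linarith [n.cast_nonneg (α := ℝ)]))
    have hlim : Filter.Tendsto (fun n : ℕ => c * (1 / ((n : ℝ) + 1))) Filter.atTop (nhds 0) := by
      simpa using tendsto_one_div_add_atTop_nhds_zero_nat.const_mul c
    refine integrableOn_Ioc_of_intervalIntegral_norm_bounded_left
      (fun n => (hintOn _ (hxpos n)).mono_set (Set.Ioc_subset_Ioc_right hca)) hlim
      (Filter.Eventually.of_forall fun n => le_of_eq_of_le ?_ (hbound _ (hxpos n) (hxle n)))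
    rw [intervalIntegral.integral_of_le (hxle n)]
    refine setIntegral_congr_fun measurableSet_Ioc fun y hy => ?_
    exact Real.norm_of_nonneg (one_div_nonneg.2 (hmp y ((hxpos n).trans hy.1)).le)
  have hint : IntegrableOn (fun y => 1 / m y) (Set.Ioc 0 a) := by
    rw [← Set.Ioc_union_Ioc_eq_Ioc hc0.le hca]
    exact hint0c.union (hintOn c hc0)
  refine hint.lintegral_lt_top.ne (Eq.trans ?_ hdiv)
  refine setLIntegral_congr_fun measurableSet_Ioc fun y hy => ?_
  simp only [hmeq y ⟨hy.1.le, hy.2⟩]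
end

section
/- Let C > 0 and B0 > 0, and let T > 0 satisfy 4·C·B0²·T < 1. Suppose B : [0,T] → [0,∞) is continuous and satisfies B(t) ≤ B0/√(1 − 4·C·B0²·t) for all t ∈ [0,T]. Then for all t ∈ [0,T]: exp(C·∫_0^t B(τ)² dτ) · ( B0 + C·∫_0^t exp(−C·∫_0^τ B(s)² ds)·B(τ)³ dτ ) ≤ B0/√(1 − 4·C·B0²·t). In particular, any sequence of nonnegative continuous functions B_n on [0,T] with B_1 ≤ B0 pointwise and B_{n+1}(t) ≤ exp(C∫_0^t B_n²)·(B0 + C∫_0^t exp(−C∫_0^τ B_n²)·B_n(τ)³ dτ) satisfies B_n(t) ≤ B0/√(1 − 4·C·B0²·t) for all n and all t ∈ [0,T]. -/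
open MeasureTheory intervalIntegral

/-! The majorant `φ t = B0 / √(1 - 4 C B0² t)` solves the Bernoulli equation `φ' = 2 C φ³`,
`φ 0 = B0` (`hasDerivAt_majorant`). Writing `E t = exp (-C ∫₀ᵗ B²)`, the claimed bound is equivalent
to `0 ≤ E t * φ t - B0 - C ∫₀ᵗ E B³`. The expression on the right vanishes at `0` and has derivative
`C E (2 φ³ - B² φ - B³)`, which is nonnegative as long as `0 ≤ B ≤ φ`; this is
`bound_of_continuous`. The statement about sequences follows by induction, since `B0 ≤ φ`. -/

/-- The majorant solves `φ' = 2 C φ³`. -/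
lemma hasDerivAt_majorant (C B0 t : ℝ) (ht : 0 < 1 - 4 * C * B0 ^ 2 * t) :
    HasDerivAt (fun t => B0 / Real.sqrt (1 - 4 * C * B0 ^ 2 * t))
      (2 * C * (B0 / Real.sqrt (1 - 4 * C * B0 ^ 2 * t)) ^ 3) t := by
  have h1 : HasDerivAt (fun t : ℝ => 1 - 4 * C * B0 ^ 2 * t) (-(4 * C * B0 ^ 2)) t := by
    simpa using ((hasDerivAt_id t).const_mul (4 * C * B0 ^ 2)).const_sub 1
  have hs : 0 < Real.sqrt (1 - 4 * C * B0 ^ 2 * t) := Real.sqrt_pos.2 ht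
  have h2 := (hasDerivAt_const t B0).div (h1.sqrt ht.ne') hs.ne'
  refine h2.congr_deriv ?_
  field_simp
  ring

/-- The bound for a function continuous on all of `ℝ`, where the primitives involved are
differentiable everywhere. -/
lemma bound_of_continuous (C B0 T : ℝ) (hC : 0 < C) (hB0 : 0 < B0)
    (hsmall : 4 * C * B0 ^ 2 * T < 1) (B : ℝ → ℝ) (hB : Continuous B)
    (hnn : ∀ t ∈ Set.Icc (0:ℝ) T, 0 ≤ B t)
    (hle : ∀ t ∈ Set.Icc (0:ℝ) T, B t ≤ B0 / Real.sqrt (1 - 4 * C * B0 ^ 2 * t))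
    (t : ℝ) (ht : t ∈ Set.Icc (0:ℝ) T) :
    Real.exp (C * ∫ τ in (0:ℝ)..t, (B τ) ^ 2) *
      (B0 + C * ∫ τ in (0:ℝ)..t,
        Real.exp (-(C * ∫ s in (0:ℝ)..τ, (B s) ^ 2)) * (B τ) ^ 3)
      ≤ B0 / Real.sqrt (1 - 4 * C * B0 ^ 2 * t) := by
  set φ : ℝ → ℝ := fun t => B0 / Real.sqrt (1 - 4 * C * B0 ^ 2 * t) with hφ
  set F : ℝ → ℝ := fun t => ∫ τ in (0:ℝ)..t, (B τ) ^ 2 with hF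
  set E : ℝ → ℝ := fun t => Real.exp (-(C * F t)) with hE
  have hFd : ∀ x, HasDerivAt F (B x ^ 2) x := fun x =>
    ((hB.pow 2).integral_hasStrictDerivAt 0 x).hasDerivAt
  have hEd : ∀ x, HasDerivAt E (E x * -(C * B x ^ 2)) x := fun x =>
    ((hFd x).const_mul C).neg.exp
  have hEc : Continuous E := continuous_iff_continuousAt.2 fun x => (hEd x).continuousAt
  have hId : ∀ x, HasDerivAt (fun t => ∫ τ in (0:ℝ)..t, E τ * B τ ^ 3) (E x * B x ^ 3) x :=
    fun x => ((hEc.mul (hB.pow 3)).integral_hasStrictDerivAt 0 x).hasDerivAt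
  have hGd : ∀ x ∈ Set.Icc (0:ℝ) T,
      HasDerivAt (fun t => E t * φ t - C * ∫ τ in (0:ℝ)..t, E τ * B τ ^ 3)
        (E x * -(C * B x ^ 2) * φ x + E x * (2 * C * φ x ^ 3) - C * (E x * B x ^ 3)) x := by
    intro x hx
    have hpos : 0 < 1 - 4 * C * B0 ^ 2 * x := by
      have : 4 * C * B0 ^ 2 * x ≤ 4 * C * B0 ^ 2 * T :=
        mul_le_mul_of_nonneg_left hx.2 (by positivity)
      linarith
    exact ((hEd x).mul (hasDerivAt_majorant C B0 x hpos)).sub ((hId x).const_mul C)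
  have hmono : MonotoneOn (fun t => E t * φ t - C * ∫ τ in (0:ℝ)..t, E τ * B τ ^ 3)
      (Set.Icc 0 T) := by
    refine monotoneOn_of_hasDerivWithinAt_nonneg (convex_Icc 0 T)
      (fun x hx => (hGd x hx).continuousAt.continuousWithinAt)
      (fun x hx => (hGd x (interior_subset hx)).hasDerivWithinAt) ?_
    intro x hx
    have hb := hnn x (interior_subset hx)
    have hbφ : B x ≤ φ x := hle x (interior_subset hx)
    have h2 : B x ^ 2 * φ x ≤ φ x ^ 2 * φ x := by gcongr
    have h3 : B x ^ 3 ≤ φ x ^ 3 := by gcongr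
    have hfac : 0 ≤ C * E x * (2 * φ x ^ 3 - B x ^ 2 * φ x - B x ^ 3) :=
      mul_nonneg (mul_nonneg hC.le (Real.exp_pos _).le) (by linarith [pow_succ (φ x) 2])
    linarith
  have h0 := hmono ⟨le_rfl, ht.1.trans ht.2⟩ ht ht.1
  have hstart : E 0 * φ 0 = B0 := by simp [hE, hF, hφ]
  have hkey : B0 + C * ∫ τ in (0:ℝ)..t, E τ * B τ ^ 3 ≤ E t * φ t := by
    simp only [hstart, integral_same, mul_zero, sub_zero] at h0
    linarith
  calc Real.exp (C * F t) * (B0 + C * ∫ τ in (0:ℝ)..t, E τ * B τ ^ 3)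
      ≤ Real.exp (C * F t) * (E t * φ t) := by gcongr
    _ = φ t := by rw [← mul_assoc, ← Real.exp_add, add_neg_cancel, Real.exp_zero, one_mul]

/-- Uniform a priori bound for the iterative scheme with cubic nonlinearity. -/
theorem uniform_bound_iterative_scheme (C B0 T : ℝ) (hC : 0 < C) (hB0 : 0 < B0)
    (hT : 0 < T) (hsmall : 4 * C * B0 ^ 2 * T < 1) :
    (∀ B : ℝ → ℝ, ContinuousOn B (Set.Icc 0 T) → (∀ t ∈ Set.Icc (0:ℝ) T, 0 ≤ B t) →
      (∀ t ∈ Set.Icc (0:ℝ) T, B t ≤ B0 / Real.sqrt (1 - 4 * C * B0 ^ 2 * t)) →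
      ∀ t ∈ Set.Icc (0:ℝ) T,
        Real.exp (C * ∫ τ in (0:ℝ)..t, (B τ) ^ 2) *
          (B0 + C * ∫ τ in (0:ℝ)..t,
            Real.exp (-(C * ∫ s in (0:ℝ)..τ, (B s) ^ 2)) * (B τ) ^ 3)
        ≤ B0 / Real.sqrt (1 - 4 * C * B0 ^ 2 * t))
    ∧
    (∀ B : ℕ → ℝ → ℝ, (∀ n, ContinuousOn (B n) (Set.Icc 0 T)) →
      (∀ n, ∀ t ∈ Set.Icc (0:ℝ) T, 0 ≤ B n t) →
      (∀ t ∈ Set.Icc (0:ℝ) T, B 1 t ≤ B0) →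
      (∀ n, ∀ t ∈ Set.Icc (0:ℝ) T,
        B (n + 1) t ≤ Real.exp (C * ∫ τ in (0:ℝ)..t, (B n τ) ^ 2) *
          (B0 + C * ∫ τ in (0:ℝ)..t,
            Real.exp (-(C * ∫ s in (0:ℝ)..τ, (B n s) ^ 2)) * (B n τ) ^ 3)) →
      ∀ n : ℕ, 1 ≤ n → ∀ t ∈ Set.Icc (0:ℝ) T,
        B n t ≤ B0 / Real.sqrt (1 - 4 * C * B0 ^ 2 * t)) := by
  have main : ∀ B : ℝ → ℝ, ContinuousOn B (Set.Icc 0 T) → (∀ t ∈ Set.Icc (0:ℝ) T, 0 ≤ B t) →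
      (∀ t ∈ Set.Icc (0:ℝ) T, B t ≤ B0 / Real.sqrt (1 - 4 * C * B0 ^ 2 * t)) →
      ∀ t ∈ Set.Icc (0:ℝ) T,
        Real.exp (C * ∫ τ in (0:ℝ)..t, (B τ) ^ 2) *
          (B0 + C * ∫ τ in (0:ℝ)..t,
            Real.exp (-(C * ∫ s in (0:ℝ)..τ, (B s) ^ 2)) * (B τ) ^ 3)
        ≤ B0 / Real.sqrt (1 - 4 * C * B0 ^ 2 * t) := by
    intro B hB hnn hle t ht
    -- Only values on `[0, T]` matter, so `B` may be replaced by its constant extension to `ℝ`.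
    set B' : ℝ → ℝ := Set.IccExtend hT.le (Set.domRestrict (Set.Icc 0 T) B) with hB'
    have hBc : Continuous B' := hB.domRestrict.Icc_extend'
    have heq : ∀ x ∈ Set.Icc (0:ℝ) T, B' x = B x := fun x hx => by
      simp [hB', Set.IccExtend_of_mem hT.le _ hx]
    have hsub : ∀ x ∈ Set.Icc (0:ℝ) T, ∀ y ∈ Set.uIcc 0 x, y ∈ Set.Icc (0:ℝ) T := by
      intro x hx y hy
      rw [Set.uIcc_of_le hx.1] at hy
      exact ⟨hy.1, hy.2.trans hx.2⟩
    have hsq : ∀ x ∈ Set.Icc (0:ℝ) T,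
        ∫ τ in (0:ℝ)..x, (B' τ) ^ 2 = ∫ τ in (0:ℝ)..x, (B τ) ^ 2 := fun x hx =>
      integral_congr fun y hy => by simp only [heq y (hsub x hx y hy)]
    have hcube : ∫ τ in (0:ℝ)..t, Real.exp (-(C * ∫ s in (0:ℝ)..τ, (B' s) ^ 2)) * (B' τ) ^ 3
        = ∫ τ in (0:ℝ)..t, Real.exp (-(C * ∫ s in (0:ℝ)..τ, (B s) ^ 2)) * (B τ) ^ 3 :=
      integral_congr fun y hy => by
        simp only [heq y (hsub t ht y hy), hsq y (hsub t ht y hy)]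
    have h := bound_of_continuous C B0 T hC hB0 hsmall B' hBc
      (fun x hx => (heq x hx).symm ▸ hnn x hx) (fun x hx => (heq x hx).symm ▸ hle x hx) t ht
    rwa [hsq t ht, hcube] at h
  refine ⟨main, ?_⟩
  intro B hB hnn h1 hrec n hn
  induction n, hn using Nat.le_induction with
  | base =>
    intro t ht
    have hle : 4 * C * B0 ^ 2 * t ≤ 4 * C * B0 ^ 2 * T :=
      mul_le_mul_of_nonneg_left ht.2 (by positivity)
    have h0 : 0 ≤ 4 * C * B0 ^ 2 * t := mul_nonneg (by positivity) ht.1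
    refine (h1 t ht).trans (le_div_self hB0.le (Real.sqrt_pos.2 (by linarith)) ?_)
    exact Real.sqrt_le_one.2 (by linarith)
  | succ n _ ih =>
    intro t ht
    exact (hrec n t ht).trans (main (B n) (hB n) (hnn n) ih t ht)
end

section
/- Let α ∈ (0,1), let g(x) = (1/2)e^{−|x|}, and for each positive integer N define φ_N : ℝ → ℝ by φ_N(x) = e^{αN} for x < −N, φ_N(x) = e^{−αx} for −N ≤ x ≤ 0, and φ_N(x) = 1 for x > 0. Then there exists a constant C0 > 0, depending only on α (one may take C0 = 1/(1−α)), such that for every positive integer N and every x ∈ ℝ: φ_N(x)·∫_ℝ g(x−y)·φ_N(y)^{−1} dy ≤ C0, and φ_N(x)·∫_ℝ |g'(x−y)|·φ_N(y)^{−1} dy ≤ C0, where g'(x) = −(1/2)·sgn(x)·e^{−|x|} for x ≠ 0. -/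
/-!
The logarithm of the weight, `log φ_N(x) = α · min N (max 0 (-x))`, is `α`-Lipschitz for every `N`.
Hence `φ_N(x) / φ_N(y) ≤ e^{α|x - y|}` (`weight_le`), and both kernels, being bounded in absolute
value by `(1/2) e^{-|x - y|}`, give integrands at most `(1/2) e^{-(1 - α)|x - y|}` after
multiplication by `φ_N(x) / φ_N(y)`. The integral of this majorant over `ℝ` is `1 / (1 - α)`
(`integral_majorant`), which is the constant `C0`.
-/

open MeasureTheory

lemma integral_majorant {c : ℝ} (hc : 0 < c) (x : ℝ) :
    ∫ y : ℝ, (1 / 2) * Real.exp (-c * |x - y|) = 1 / c := by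
  rw [integral_sub_left_eq_self (fun u : ℝ => (1 / 2) * Real.exp (-c * |u|)) volume x,
    integral_comp_abs (f := fun u : ℝ => (1 / 2) * Real.exp (-c * u)),
    integral_const_mul, integral_exp_mul_Ioi (by linarith) 0]
  simp

lemma integrable_majorant {c : ℝ} (hc : 0 < c) (x : ℝ) :
    Integrable (fun y : ℝ => (1 / 2) * Real.exp (-c * |x - y|)) := by
  -- a non-integrable function would have Bochner integral zero
  by_contra h
  have h1 := integral_majorant hc x
  rw [integral_undef h] at h1
  have : 0 < 1 / c := by positivity
  linarith

/-- Closed form of the truncated exponential weight. -/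
lemma weight_eq {α : ℝ} {φ : ℕ → ℝ → ℝ}
    (hφ : ∀ (N : ℕ) (x : ℝ), φ N x = if x < -(N : ℝ) then Real.exp (α * N)
      else if x ≤ 0 then Real.exp (-(α * x)) else 1) (N : ℕ) (x : ℝ) :
    φ N x = Real.exp (α * min (N : ℝ) (max 0 (-x))) := by
  have hN : (0 : ℝ) ≤ N := N.cast_nonneg
  rw [hφ]
  split_ifs with h1 h2
  · rw [max_eq_right (by linarith), min_eq_left (by linarith)]
  · rw [max_eq_right (by linarith), min_eq_right (by linarith)]
    ring_nf
  · rw [max_eq_left (by linarith), min_eq_right hN]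
    simp

lemma weight_le {α : ℝ} (hα : 0 < α) {φ : ℕ → ℝ → ℝ}
    (hφ : ∀ (N : ℕ) (x : ℝ), φ N x = if x < -(N : ℝ) then Real.exp (α * N)
      else if x ≤ 0 then Real.exp (-(α * x)) else 1) (N : ℕ) (x y : ℝ) :
    φ N x * (φ N y)⁻¹ ≤ Real.exp (α * |x - y|) := by
  rw [weight_eq hφ, weight_eq hφ, ← Real.exp_neg, ← Real.exp_add, Real.exp_le_exp]
  have h : min (N : ℝ) (max 0 (-x)) - min (N : ℝ) (max 0 (-y)) ≤ |x - y| := by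
    grind
  nlinarith

/-- The weighted bound for any nonnegative kernel dominated by the Green's function. -/
lemma weighted_kernel_bound {α : ℝ} (hα : α ∈ Set.Ioo (0:ℝ) 1) {φ : ℕ → ℝ → ℝ}
    (hφ : ∀ (N : ℕ) (x : ℝ), φ N x = if x < -(N : ℝ) then Real.exp (α * N)
      else if x ≤ 0 then Real.exp (-(α * x)) else 1) (N : ℕ) (x : ℝ) {k : ℝ → ℝ}
    (hk0 : ∀ y, 0 ≤ k y) (hk : ∀ y, k y ≤ (1 / 2) * Real.exp (-|x - y|)) :
    φ N x * (∫ y : ℝ, k y * (φ N y)⁻¹) ≤ 1 / (1 - α) := by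
  have hc : 0 < 1 - α := by linarith [hα.2]
  have hpos : ∀ y, 0 < φ N y := fun y => by rw [weight_eq hφ]; positivity
  rw [← integral_const_mul, ← integral_majorant hc x]
  refine integral_mono_of_nonneg (.of_forall fun y => ?_) (integrable_majorant hc x)
    (.of_forall fun y => ?_)
  · exact mul_nonneg (hpos x).le (mul_nonneg (hk0 y) (inv_nonneg.2 (hpos y).le))
  · calc φ N x * (k y * (φ N y)⁻¹) = k y * (φ N x * (φ N y)⁻¹) := by ring
      _ ≤ (1 / 2) * Real.exp (-|x - y|) * Real.exp (α * |x - y|) :=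
        mul_le_mul (hk y) (weight_le hα.1 hφ N x y)
          (mul_nonneg (hpos x).le (inv_nonneg.2 (hpos y).le)) (by positivity)
      _ = (1 / 2) * Real.exp (-(1 - α) * |x - y|) := by
        rw [mul_assoc, ← Real.exp_add]
        ring_nf

/-- Uniform weighted convolution bounds for the Green's function `g(x) = (1/2)e^{−|x|}`
against the truncated exponential weight `φ_N`. -/
theorem weighted_green_function_bounds (α : ℝ) (hα : α ∈ Set.Ioo (0:ℝ) 1)
    (φ : ℕ → ℝ → ℝ)
    (hφ : ∀ (N : ℕ) (x : ℝ), φ N x = if x < -(N : ℝ) then Real.exp (α * N)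
      else if x ≤ 0 then Real.exp (-(α * x)) else 1) :
    ∃ C0 : ℝ, 0 < C0 ∧ ∀ N : ℕ, 0 < N → ∀ x : ℝ,
      φ N x * (∫ y : ℝ, (1 / 2) * Real.exp (-|x - y|) * (φ N y)⁻¹) ≤ C0 ∧
      φ N x * (∫ y : ℝ, |(-(1 / 2)) * Real.sign (x - y) * Real.exp (-|x - y|)| * (φ N y)⁻¹)
        ≤ C0 := by
  refine ⟨1 / (1 - α), one_div_pos.2 (by linarith [hα.2]), fun N _ x => ⟨?_, ?_⟩⟩
  · exact weighted_kernel_bound hα hφ N x (fun y => by positivity) (fun y => le_rfl)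
  · refine weighted_kernel_bound hα hφ N x (fun y => abs_nonneg _) (fun y => ?_)
    have hs : |Real.sign (x - y)| ≤ 1 := by
      rcases Real.sign_apply_eq (x - y) with h | h | h <;> simp [h]
    have he := Real.exp_pos (-|x - y|)
    rw [abs_mul, abs_mul, abs_of_pos he, abs_neg, abs_of_pos (by norm_num : (0:ℝ) < 1 / 2)]
    nlinarith
end

section
/- Let T > 0, α ∈ (0,1] and β ∈ (α/3, α). Let (ρ, u, v) be a classical solution on [0,T) of the three-component Novikov system in convolution form, with finite bound M and finite uniform L² bound as in the definition of a classical solution. Suppose the initial data satisfy lim_{|x|→∞} e^{α|x|}·|ρ(0,x)| = 0 and there exists L > 0 with |ρ_x(0,x)| + |u(0,x)| + |u_x(0,x)| + |v(0,x)| + |v_x(0,x)| + |ρ(0,x)| ≤ L·e^{−β|x|} for all x ∈ ℝ. Then for every t ∈ [0,T), lim_{|x|→∞} e^{α|x|}·|ρ(t,x)| = 0. -/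
/-!
The first equation is a linear transport equation `ρ_t + a ρ_x + b ρ = 0` with bounded
coefficients `a = uv`, `b = (uv)_x`, so decay of `ρ` at infinity moves with finite speed,
whatever the behaviour of `u`, `v` there. Only pointwise derivatives of `ρ` are available
(`ρ_x` need not be jointly continuous), so characteristics are replaced by a maximum principle:
every `f ≥ 0` with `|f'| ≤ 2 f` and `ρ(0, ·) ≤ f` gives `ρ(t, x) ≤ e^{Kt} f(x)`
(`transport_le_barrier`), which follows from the case of a barrier growing at infinity
(`transport_le_coercive_barrier`) by adding `δ (1 + x²)` and letting `δ → 0`.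

For `ε > 0`, the data satisfy `|ρ(0, x)| ≤ ε sech(αx) + C sech²(αx)`: the first term bounds them
outside a compact set, the second inside. The right side is an admissible barrier, and the
comparison gives `e^{α|x|} |ρ(t, x)| ≤ e^{Kt} (2ε + 4C e^{-α|x|})`.
-/

open MeasureTheory

/-- The Green's function `g(x) = (1/2)e^{−|x|}` of `(1−∂_x²)^{−1}` on `ℝ`. -/
noncomputable def greenG (x : ℝ) : ℝ := (1 / 2) * Real.exp (-|x|)

/-- The (pointwise a.e.) derivative `g'(x) = −(1/2)·sgn(x)·e^{−|x|}` of the Green's function. -/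
noncomputable def greenG' (x : ℝ) : ℝ := -(1 / 2) * Real.sign x * Real.exp (-|x|)

/-- A classical solution on `[0,T)` of the three-component Novikov system in convolution
form, with uniform pointwise bound `M` on `(ρ, ρ_x, u, u_x, u_{xx}, v, v_x, v_{xx})`
and uniform `L²` bound `M₂` on `(ρ, ρ_x, u, u_x, v, v_x)`. -/
def IsClassicalSolution3NS (T : ℝ) (ρ u v : ℝ → ℝ → ℝ) (M M₂ : ℝ) : Prop :=
  (∀ t ∈ Set.Ico (0:ℝ) T, ContDiff ℝ 1 (ρ t) ∧ ContDiff ℝ 2 (u t) ∧ ContDiff ℝ 2 (v t)) ∧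
  -- ρ_t + (uvρ)_x = 0
  (∀ t ∈ Set.Ico (0:ℝ) T, ∀ x : ℝ,
    HasDerivWithinAt (fun s => ρ s x)
      (-(deriv (fun y => u t y * v t y * ρ t y) x)) (Set.Ico 0 T) t) ∧
  -- u_t + u·u_x·v + g*(3u·u_x·v + u_x²·v_x + u·u_{xx}·v_x + ρ²u) + g'*(u·u_x·v_x) = 0
  (∀ t ∈ Set.Ico (0:ℝ) T, ∀ x : ℝ,
    HasDerivWithinAt (fun s => u s x)
      (-(u t x * deriv (u t) x * v t x
        + (∫ y : ℝ, greenG (x - y) *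
            (3 * u t y * deriv (u t) y * v t y
              + (deriv (u t) y) ^ 2 * deriv (v t) y
              + u t y * deriv (deriv (u t)) y * deriv (v t) y
              + (ρ t y) ^ 2 * u t y))
        + (∫ y : ℝ, greenG' (x - y) * (u t y * deriv (u t) y * deriv (v t) y))))
      (Set.Ico 0 T) t) ∧
  -- v_t + u·v·v_x + g*(3u·v·v_x + u_x·v_x² + u_x·v·v_{xx} − ρ²v) + g'*(u_x·v·v_x) = 0
  (∀ t ∈ Set.Ico (0:ℝ) T, ∀ x : ℝ,
    HasDerivWithinAt (fun s => v s x)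
      (-(u t x * v t x * deriv (v t) x
        + (∫ y : ℝ, greenG (x - y) *
            (3 * u t y * v t y * deriv (v t) y
              + deriv (u t) y * (deriv (v t) y) ^ 2
              + deriv (u t) y * v t y * deriv (deriv (v t)) y
              - (ρ t y) ^ 2 * v t y))
        + (∫ y : ℝ, greenG' (x - y) * (deriv (u t) y * v t y * deriv (v t) y))))
      (Set.Ico 0 T) t) ∧
  (∀ t ∈ Set.Ico (0:ℝ) T, ∀ x : ℝ,
    |ρ t x| + |deriv (ρ t) x| + |u t x| + |deriv (u t) x| + |deriv (deriv (u t)) x|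
      + |v t x| + |deriv (v t) x| + |deriv (deriv (v t)) x| ≤ M) ∧
  (∀ t ∈ Set.Ico (0:ℝ) T,
    eLpNorm (ρ t) 2 volume + eLpNorm (deriv (ρ t)) 2 volume + eLpNorm (u t) 2 volume
      + eLpNorm (deriv (u t)) 2 volume + eLpNorm (v t) 2 volume
      + eLpNorm (deriv (v t)) 2 volume ≤ ENNReal.ofReal M₂)

/-! ### Comparison principle for the transport equation -/

/-- Maximum principle for `r_t + a r_x + b r = 0` against a barrier exceeding `sup r` outside a
bounded interval, which forces a positive maximum of `e^{-Kt} r - f` to be attained. -/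
lemma transport_le_coercive_barrier {T A N R : ℝ} {r a b : ℝ → ℝ → ℝ} {f f' : ℝ → ℝ}
    (hA : 0 ≤ A) (hN : 0 ≤ N)
    (hd : ∀ t ∈ Set.Ico (0:ℝ) T, Differentiable ℝ (r t))
    (ht : ∀ t ∈ Set.Ico (0:ℝ) T, ∀ x, HasDerivWithinAt (fun s => r s x)
      (-(a t x * deriv (r t) x + b t x * r t x)) (Set.Ico 0 T) t)
    (ha : ∀ t ∈ Set.Ico (0:ℝ) T, ∀ x, |a t x| ≤ A)
    (hb : ∀ t ∈ Set.Ico (0:ℝ) T, ∀ x, |b t x| ≤ 2 * A)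
    (hr : ∀ t ∈ Set.Ico (0:ℝ) T, ∀ x, |r t x| ≤ N)
    (hrx : ∀ t ∈ Set.Ico (0:ℝ) T, ∀ x, |deriv (r t) x| ≤ N)
    (hf : ∀ x, HasDerivAt f (f' x) x) (hfpos : ∀ x, 0 < f x) (hf' : ∀ x, |f' x| ≤ 2 * f x)
    (hR : ∀ x, x ∉ Set.Icc (-R) R → N ≤ f x)
    (h0 : ∀ x, r 0 x ≤ f x) :
    ∀ t ∈ Set.Ico (0:ℝ) T, ∀ x, Real.exp (-((4 * A + 1) * t)) * r t x ≤ f x := by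
  intro t2 ht2 x2
  by_contra! hcon
  set K := 4 * A + 1 with hK
  have hK0 : 0 < K := by positivity
  have hsub : Set.Icc 0 t2 ⊆ Set.Ico 0 T := fun s hs => ⟨hs.1, hs.2.trans_lt ht2.2⟩
  have hexp : ∀ s ∈ Set.Icc 0 t2, ∀ x, Real.exp (-(K * s)) * r s x ≤ N := fun s hs x => by
    have h1 : Real.exp (-(K * s)) ≤ 1 := by
      rw [Real.exp_le_one_iff]; have := mul_nonneg hK0.le hs.1; linarith
    calc Real.exp (-(K * s)) * r s x ≤ Real.exp (-(K * s)) * N := by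
          gcongr; exact (le_abs_self _).trans (hr s (hsub hs) x)
      _ ≤ N := by nlinarith
  let q : ℝ × ℝ → ℝ := fun p => Real.exp (-(K * p.1)) * r p.1 p.2 - f p.2
  have hfc : Continuous f := continuous_iff_continuousAt.2 fun x => (hf x).continuousAt
  have hcr : ContinuousOn (Function.uncurry r) (Set.Icc 0 t2 ×ˢ Set.univ) := by
    refine continuousOn_prod_of_continuousOn_lipschitzOnWith' _ N.toNNReal ?_ ?_
    · intro s hs
      refine (lipschitzWith_of_nnnorm_deriv_le (hd s (hsub hs)) fun x => ?_).lipschitzOnWith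
      rw [← NNReal.coe_le_coe, Real.coe_toNNReal _ hN]
      exact hrx s (hsub hs) x
    · intro x _
      exact fun s hs => ((ht s (hsub hs) x).continuousWithinAt).mono hsub
  have hqc : ContinuousOn q (Set.Icc 0 t2 ×ˢ Set.Icc (-R) R) := by
    have h1 : ContinuousOn (fun p : ℝ × ℝ => r p.1 p.2) (Set.Icc 0 t2 ×ˢ Set.Icc (-R) R) :=
      hcr.mono (Set.prod_mono le_rfl (Set.subset_univ _))
    refine ContinuousOn.sub (ContinuousOn.mul ?_ h1) ?_ <;>
    exact Continuous.continuousOn (by fun_prop)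
  have hx2 : x2 ∈ Set.Icc (-R) R := by
    by_contra h
    linarith [hR x2 h, hexp t2 ⟨ht2.1, le_rfl⟩ x2]
  obtain ⟨⟨t0, x0⟩, ⟨ht0, hx0⟩, hmax⟩ := (isCompact_Icc.prod isCompact_Icc).exists_isMaxOn
    ⟨(t2, x2), ⟨⟨ht2.1, le_rfl⟩, hx2⟩⟩ hqc
  simp only at ht0 hx0
  have hq0 : 0 < q (t0, x0) := by
    have h1 : q (t2, x2) ≤ q (t0, x0) := hmax ⟨⟨ht2.1, le_rfl⟩, hx2⟩
    have h2 : 0 < q (t2, x2) := by simp only [q]; linarith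
    linarith
  have ht0pos : 0 < t0 := by
    rcases ht0.1.lt_or_eq with h | h
    · exact h
    · exfalso
      simp only [q, ← h] at hq0
      simp at hq0
      linarith [h0 x0]
  have ht0T := hsub ht0
  -- Outside `[-R, R]` the function `q` is nonpositive, so the maximum is global in `x`.
  have hxmax : IsLocalMax (fun x => q (t0, x)) x0 := by
    refine Filter.Eventually.of_forall fun x => ?_
    by_cases hx : x ∈ Set.Icc (-R) R
    · exact hmax ⟨ht0, hx⟩
    · have := hR x hx
      have := hexp t0 ht0 x
      refine le_trans ?_ hq0.le
      simp only [q]; linarith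
  have hqx : Real.exp (-(K * t0)) * deriv (r t0) x0 = f' x0 := by
    have := hxmax.hasDerivAt_eq_zero
      (((hd t0 ht0T x0).hasDerivAt.const_mul (Real.exp (-(K * t0)))).sub (hf x0))
    linarith
  have hqt : HasDerivWithinAt (fun s => q (s, x0))
      (Real.exp (-(K * t0)) * (-(K * 1)) * r t0 x0 + Real.exp (-(K * t0)) *
        (-(a t0 x0 * deriv (r t0) x0 + b t0 x0 * r t0 x0))) (Set.Icc 0 t0) t0 := by
    have h1 : HasDerivWithinAt (fun s => Real.exp (-(K * s)))
        (Real.exp (-(K * t0)) * (-(K * 1))) (Set.Icc 0 t0) t0 :=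
      (((hasDerivAt_id t0).const_mul K).neg.exp).hasDerivWithinAt
    exact (h1.mul ((ht t0 ht0T x0).mono
      ((Set.Icc_subset_Icc_right ht0.2).trans hsub))).sub_const (f x0)
  -- At the maximum the left time derivative is nonnegative; the equation makes it negative.
  have hnn : 0 ≤ Real.exp (-(K * t0)) * (-(K * 1)) * r t0 x0 + Real.exp (-(K * t0)) *
        (-(a t0 x0 * deriv (r t0) x0 + b t0 x0 * r t0 x0)) := by
    have hslope := hasDerivWithinAt_iff_tendsto_slope' (s := Set.Ico 0 t0) (by simp) |>.1
      (hqt.mono Set.Ico_subset_Icc_self)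
    have : (nhdsWithin t0 (Set.Ico 0 t0)).NeBot := by
      rw [nhdsWithin_Ico_eq_nhdsLT ht0pos]; infer_instance
    refine ge_of_tendsto hslope ?_
    filter_upwards [self_mem_nhdsWithin] with s hs
    have h1 : q (s, x0) ≤ q (t0, x0) := hmax ⟨⟨hs.1, hs.2.le.trans ht0.2⟩, hx0⟩
    rw [slope_def_field]
    exact div_nonneg_of_nonpos (by linarith) (by linarith [hs.2])
  set P := Real.exp (-(K * t0)) * r t0 x0 with hP
  have hPf : f x0 < P := by simp only [q] at hq0; linarith
  have hPpos : 0 < P := (hfpos x0).trans hPf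
  have hnn' : 0 ≤ -K * P - a t0 x0 * f' x0 - b t0 x0 * P := by
    rw [← hqx, hP]; linarith
  have h1 : -(a t0 x0 * f' x0) ≤ A * (2 * P) := by
    calc -(a t0 x0 * f' x0) ≤ |a t0 x0 * f' x0| := neg_le_abs _
      _ = |a t0 x0| * |f' x0| := abs_mul _ _
      _ ≤ A * (2 * P) := by
        gcongr
        · exact ha t0 ht0T x0
        · linarith [hf' x0]
  have h2 : -(b t0 x0 * P) ≤ 2 * A * P := by
    have := (neg_le_abs _).trans (hb t0 ht0T x0)
    nlinarith
  -- `K` exceeds `2 sup |a| + sup |b| ≤ 4 A`, so the derivative is at most `-P < 0`.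
  rw [hK] at hnn'
  linarith

/-- Comparison for `r_t + a r_x + b r = 0` with an arbitrary nonnegative barrier satisfying
`|f'| ≤ 2 f`. -/
lemma transport_le_barrier {T A N : ℝ} {r a b : ℝ → ℝ → ℝ} {f f' : ℝ → ℝ}
    (hA : 0 ≤ A) (hN : 0 ≤ N)
    (hd : ∀ t ∈ Set.Ico (0:ℝ) T, Differentiable ℝ (r t))
    (ht : ∀ t ∈ Set.Ico (0:ℝ) T, ∀ x, HasDerivWithinAt (fun s => r s x)
      (-(a t x * deriv (r t) x + b t x * r t x)) (Set.Ico 0 T) t)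
    (ha : ∀ t ∈ Set.Ico (0:ℝ) T, ∀ x, |a t x| ≤ A)
    (hb : ∀ t ∈ Set.Ico (0:ℝ) T, ∀ x, |b t x| ≤ 2 * A)
    (hr : ∀ t ∈ Set.Ico (0:ℝ) T, ∀ x, |r t x| ≤ N)
    (hrx : ∀ t ∈ Set.Ico (0:ℝ) T, ∀ x, |deriv (r t) x| ≤ N)
    (hf : ∀ x, HasDerivAt f (f' x) x) (hf0 : ∀ x, 0 ≤ f x) (hf' : ∀ x, |f' x| ≤ 2 * f x)
    (h0 : ∀ x, r 0 x ≤ f x) :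
    ∀ t ∈ Set.Ico (0:ℝ) T, ∀ x, r t x ≤ Real.exp ((4 * A + 1) * t) * f x := by
  intro t htT x
  have key : ∀ δ > 0, Real.exp (-((4 * A + 1) * t)) * r t x ≤ f x + δ * (1 + x ^ 2) := by
    intro δ hδ
    refine transport_le_coercive_barrier (f := fun x => f x + δ * (1 + x ^ 2))
      (f' := fun x => f' x + δ * (2 * x)) (R := N / δ + 1) hA hN hd ht ha hb hr hrx
      ?_ ?_ ?_ ?_ ?_ t htT x
    · intro x
      have h1 : HasDerivAt (fun x : ℝ => 1 + x ^ 2) (2 * x) x := by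
        simpa using (hasDerivAt_pow 2 x).const_add 1
      exact (hf x).add (h1.const_mul δ)
    · intro x
      have := hf0 x
      positivity
    · intro x
      have h1 : |2 * x| ≤ 2 * (1 + x ^ 2) := by
        rw [abs_le]; constructor <;> nlinarith [sq_nonneg (x - 1), sq_nonneg (x + 1)]
      calc |f' x + δ * (2 * x)| ≤ |f' x| + |δ * (2 * x)| := abs_add_le _ _
        _ ≤ 2 * f x + δ * (2 * (1 + x ^ 2)) := by
          rw [abs_mul, abs_of_pos hδ]; gcongr; exact hf' x
        _ = _ := by ring
    · intro x hx
      have h1 : N / δ + 1 < |x| := by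
        by_contra! h; exact hx (abs_le.1 h)
      have h2 : N / δ ≤ 1 + x ^ 2 := by
        nlinarith [sq_abs x, sq_nonneg (|x| - 1)]
      have h3 : N ≤ δ * (1 + x ^ 2) := by
        rw [div_le_iff₀ hδ] at h2; linarith
      have := hf0 x
      linarith
    · intro x
      have := h0 x
      have : 0 ≤ δ * (1 + x ^ 2) := by positivity
      linarith
  have hle : Real.exp (-((4 * A + 1) * t)) * r t x ≤ f x := by
    refine le_of_forall_pos_le_add fun ε hε => ?_
    have hp : 0 < 1 + x ^ 2 := by positivity
    have := key (ε / (1 + x ^ 2)) (by positivity)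
    rwa [div_mul_cancel₀ _ hp.ne'] at this
  calc r t x = Real.exp ((4 * A + 1) * t) * (Real.exp (-((4 * A + 1) * t)) * r t x) := by
        rw [← mul_assoc, ← Real.exp_add]; simp
    _ ≤ _ := by gcongr

/-! ### Barrier functions -/

/-- `ε sech(αx) + C sech²(αx)` satisfies the barrier condition `|f'| ≤ 2 f` when `α ≤ 1`. -/
lemma sech_barrier {α ε C : ℝ} (hα : 0 < α) (hα1 : α ≤ 1) (hε : 0 ≤ ε) (hC : 0 ≤ C) :
    ∃ f' : ℝ → ℝ, ∀ x,
      HasDerivAt (fun x => ε * (Real.cosh (α * x))⁻¹ + C * (Real.cosh (α * x))⁻¹ ^ 2) (f' x) x ∧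
      |f' x| ≤ 2 * (ε * (Real.cosh (α * x))⁻¹ + C * (Real.cosh (α * x))⁻¹ ^ 2) := by
  have main : ∀ x, ∃ d, HasDerivAt (fun x => (Real.cosh (α * x))⁻¹) d x ∧
      |d| ≤ (Real.cosh (α * x))⁻¹ := by
    intro x
    have hc := Real.cosh_pos (α * x)
    refine ⟨_, (((hasDerivAt_id x).const_mul α).cosh).inv hc.ne', ?_⟩
    have hs : |Real.sinh (α * x)| ≤ Real.cosh (α * x) :=
      abs_le_of_sq_le_sq (by nlinarith [Real.cosh_sq (α * x)]) hc.le
    simp only [id, mul_one]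
    rw [abs_div, abs_neg, abs_mul, abs_of_pos hα, abs_of_pos (pow_pos hc 2),
      div_le_iff₀ (pow_pos hc 2)]
    have : (Real.cosh (α * x))⁻¹ * Real.cosh (α * x) ^ 2 = Real.cosh (α * x) := by
      field_simp
    rw [this]
    nlinarith [abs_nonneg (Real.sinh (α * x))]
  choose d hd hd' using main
  refine ⟨_, fun x => ⟨((hd x).const_mul ε).add (((hd x).pow 2).const_mul C), ?_⟩⟩
  have hs : 0 < (Real.cosh (α * x))⁻¹ := inv_pos.2 (Real.cosh_pos _)
  have h := hd' x
  generalize (Real.cosh (α * x))⁻¹ = s at hs h ⊢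
  have h1 : |ε * d x| ≤ ε * s := by rw [abs_mul, abs_of_nonneg hε]; gcongr
  have h2 : |C * ((2 : ℕ) * s ^ (2 - 1) * d x)| ≤ C * (2 * s ^ 2) := by
    rw [abs_mul, abs_of_nonneg hC, abs_mul, abs_of_nonneg (by positivity)]
    have h3 : s * |d x| ≤ s * s := by gcongr
    refine mul_le_mul_of_nonneg_left ?_ hC
    norm_num
    nlinarith
  refine (abs_add_le _ _).trans ((add_le_add h1 h2).trans ?_)
  nlinarith [mul_nonneg hε hs.le]

/-! ### Decay of `ρ` -/

/-- Persistence of the little-o decay `ρ(t,x) = o(e^{−α|x|})` for the three-component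
Novikov system, under the weaker big-O decay `e^{−β|x|}`, `β ∈ (α/3, α)`, of the data. -/
theorem little_o_decay_rho_3NS (T α β : ℝ) (hT : 0 < T)
    (hα : 0 < α) (hα1 : α ≤ 1) (hβ : α / 3 < β) (hβα : β < α)
    (ρ u v : ℝ → ℝ → ℝ) (M M₂ : ℝ)
    (hsol : IsClassicalSolution3NS T ρ u v M M₂)
    (hρ0 : Filter.Tendsto (fun x : ℝ => Real.exp (α * |x|) * |ρ 0 x|)
      (Filter.cocompact ℝ) (nhds 0))
    (L : ℝ) (hL : 0 < L)
    (h0 : ∀ x : ℝ,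
      |ρ 0 x| + |deriv (ρ 0) x| + |u 0 x| + |deriv (u 0) x| + |v 0 x| + |deriv (v 0) x|
        ≤ L * Real.exp (-(β * |x|))) :
    ∀ t ∈ Set.Ico (0:ℝ) T,
      Filter.Tendsto (fun x : ℝ => Real.exp (α * |x|) * |ρ t x|)
        (Filter.cocompact ℝ) (nhds 0) := by
  obtain ⟨hreg, hρt, -, -, hM, -⟩ := hsol
  intro t htT
  have h0T : (0:ℝ) ∈ Set.Ico 0 T := ⟨le_rfl, hT⟩
  have hM0 : 0 ≤ M := le_trans (by positivity) (hM 0 h0T 0)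
  have bds : ∀ t ∈ Set.Ico (0:ℝ) T, ∀ x, |ρ t x| ≤ M ∧ |deriv (ρ t) x| ≤ M ∧ |u t x| ≤ M ∧
      |deriv (u t) x| ≤ M ∧ |v t x| ≤ M ∧ |deriv (v t) x| ≤ M := by
    intro t ht x
    have h := hM t ht x
    have h1 := abs_nonneg (ρ t x)
    have h2 := abs_nonneg (deriv (ρ t) x)
    have h3 := abs_nonneg (u t x)
    have h4 := abs_nonneg (deriv (u t) x)
    have h5 := abs_nonneg (deriv (deriv (u t)) x)
    have h6 := abs_nonneg (v t x)
    have h7 := abs_nonneg (deriv (v t) x)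
    have h8 := abs_nonneg (deriv (deriv (v t)) x)
    refine ⟨?_, ?_, ?_, ?_, ?_, ?_⟩ <;> linarith
  have hdρ : ∀ t ∈ Set.Ico (0:ℝ) T, Differentiable ℝ (ρ t) := fun t ht =>
    (hreg t ht).1.differentiable (by norm_num)
  have hdu : ∀ t ∈ Set.Ico (0:ℝ) T, Differentiable ℝ (u t) := fun t ht =>
    (hreg t ht).2.1.differentiable (by norm_num)
  have hdv : ∀ t ∈ Set.Ico (0:ℝ) T, Differentiable ℝ (v t) := fun t ht =>
    (hreg t ht).2.2.differentiable (by norm_num)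
  let a : ℝ → ℝ → ℝ := fun t x => u t x * v t x
  let b : ℝ → ℝ → ℝ := fun t x => deriv (u t) x * v t x + u t x * deriv (v t) x
  have ha : ∀ t ∈ Set.Ico (0:ℝ) T, ∀ x, |a t x| ≤ M ^ 2 := by
    intro t ht x
    obtain ⟨-, -, h3, -, h5, -⟩ := bds t ht x
    simp only [a, abs_mul, sq]
    gcongr
  have hb : ∀ t ∈ Set.Ico (0:ℝ) T, ∀ x, |b t x| ≤ 2 * M ^ 2 := by
    intro t ht x
    obtain ⟨-, -, h3, h4, h5, h6⟩ := bds t ht x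
    calc |b t x| ≤ |deriv (u t) x * v t x| + |u t x * deriv (v t) x| := abs_add_le _ _
      _ ≤ M * M + M * M := by simp only [abs_mul]; gcongr
      _ = _ := by ring
  have heq : ∀ t ∈ Set.Ico (0:ℝ) T, ∀ x, HasDerivWithinAt (fun s => ρ s x)
      (-(a t x * deriv (ρ t) x + b t x * ρ t x)) (Set.Ico 0 T) t := by
    intro t ht x
    refine (hρt t ht x).congr_deriv ?_
    have := ((hdu t ht x).hasDerivAt.mul (hdv t ht x).hasDerivAt).mul (hdρ t ht x).hasDerivAt
    rw [show deriv (fun y => u t y * v t y * ρ t y) x = _ from this.deriv]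
    simp only [a, b, Pi.mul_apply]
    ring
  -- Two-sided comparison: the equation is linear, so it applies to `ρ` and to `-ρ`.
  have comp : ∀ f f' : ℝ → ℝ, (∀ x, HasDerivAt f (f' x) x) → (∀ x, 0 ≤ f x) →
      (∀ x, |f' x| ≤ 2 * f x) → (∀ x, |ρ 0 x| ≤ f x) →
      ∀ x, |ρ t x| ≤ Real.exp ((4 * M ^ 2 + 1) * t) * f x := by
    intro f f' hf hf0 hf' hle x
    rw [abs_le']
    constructor
    · exact transport_le_barrier (sq_nonneg M) hM0 hdρ heq ha hb (fun t ht x => (bds t ht x).1)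
        (fun t ht x => (bds t ht x).2.1) hf hf0 hf' (fun x => (le_abs_self _).trans (hle x)) t htT x
    · have hder : ∀ t x, deriv (fun y => -ρ t y) x = -deriv (ρ t) x := fun t x => deriv.fun_neg
      refine transport_le_barrier (r := fun t x => -ρ t x) (a := a) (b := b) (sq_nonneg M) hM0
        (fun t ht => (hdρ t ht).neg) (fun t ht x => ?_) ha hb
        (fun t ht x => by simpa using (bds t ht x).1)
        (fun t ht x => by simpa [hder] using (bds t ht x).2.1)
        hf hf0 hf' (fun x => (neg_le_abs _).trans (hle x)) t htT x
      refine (heq t ht x).neg.congr_deriv ?_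
      rw [hder]; ring
  set E := Real.exp ((4 * M ^ 2 + 1) * t) with hE
  have hEpos : 0 < E := Real.exp_pos _
  rw [Metric.tendsto_nhds]
  intro η hη
  -- This `ε` turns the term `2 ε E` of the final bound into `η / 2`.
  set ε := η / (4 * E) with hεdef
  have hε : 0 < ε := by positivity
  obtain ⟨S, hS, hSsub⟩ := Filter.mem_cocompact.1 ((Metric.tendsto_nhds.1 hρ0) ε hε)
  obtain ⟨C, hCb⟩ := hS.exists_bound_of_continuousOn
    (f := fun x => Real.cosh (α * x) ^ 2) (Continuous.continuousOn (by fun_prop))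
  set D := M * |C| with hD
  have hD0 : 0 ≤ D := by positivity
  have hexpcosh : ∀ x, Real.exp (α * |x|) ≤ 2 * Real.cosh (α * x) := by
    intro x
    rw [← Real.cosh_abs, abs_mul, abs_of_pos hα, Real.cosh_eq]
    linarith [Real.exp_pos (-(α * |x|))]
  have hcoshexp : ∀ x, Real.cosh (α * x) ≤ Real.exp (α * |x|) := by
    intro x
    have : -(α * |x|) ≤ α * |x| := by have : 0 ≤ α * |x| := by positivity
                                      linarith
    rw [← Real.cosh_abs, abs_mul, abs_of_pos hα, Real.cosh_eq]
    linarith [Real.exp_le_exp.2 this]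
  obtain ⟨f', hf'⟩ := sech_barrier (ε := ε) (C := D) hα hα1 hε.le hD0
  have hbound := comp _ f' (fun x => (hf' x).1)
    (fun x => by have := Real.cosh_pos (α * x); positivity) (fun x => (hf' x).2) (by
      intro x
      have hc := Real.cosh_pos (α * x)
      by_cases hx : x ∈ S
      · have h1 : Real.cosh (α * x) ^ 2 ≤ |C| :=
          (le_abs_self _).trans ((hCb x hx).trans (le_abs_self C))
        have h2 : M ≤ D * (Real.cosh (α * x))⁻¹ ^ 2 := by
          rw [inv_pow, ← div_eq_mul_inv, le_div_iff₀ (by positivity)]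
          exact mul_le_mul_of_nonneg_left h1 hM0
        have h3 : 0 ≤ ε * (Real.cosh (α * x))⁻¹ := by positivity
        linarith [(bds 0 h0T x).1]
      · have h1 : Real.exp (α * |x|) * |ρ 0 x| < ε := by
          have h := hSsub hx
          simp only [Set.mem_ofPred_eq, Real.dist_eq, sub_zero] at h
          exact (le_abs_self _).trans_lt h
        have h2 : |ρ 0 x| ≤ ε * (Real.cosh (α * x))⁻¹ := by
          rw [← div_eq_mul_inv, le_div_iff₀ hc]
          have := mul_le_mul_of_nonneg_right (hcoshexp x) (abs_nonneg (ρ 0 x))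
          linarith
        have h3 : 0 ≤ D * (Real.cosh (α * x))⁻¹ ^ 2 := by positivity
        linarith)
  have hdecay : Filter.Tendsto (fun x : ℝ => E * (D * (4 * Real.exp (-(α * |x|)))))
      (Filter.cocompact ℝ) (nhds 0) := by
    have h1 : Filter.Tendsto (fun x : ℝ => α * |x|) (Filter.cocompact ℝ) Filter.atTop :=
      (tendsto_norm_cocompact_atTop (E := ℝ)).const_mul_atTop hα
    simpa using (((Real.tendsto_exp_neg_atTop_nhds_zero.comp h1).const_mul 4).const_mul D).const_mul E
  filter_upwards [(Metric.tendsto_nhds.1 hdecay) (η / 2) (half_pos hη)] with x hx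
  rw [Real.dist_eq, sub_zero] at hx ⊢
  have hx' := (le_abs_self _).trans_lt hx
  rw [abs_of_nonneg (by positivity)]
  have hc := Real.cosh_pos (α * x)
  have hs : Real.exp (α * |x|) * (Real.cosh (α * x))⁻¹ ≤ 2 := by
    rw [← div_eq_mul_inv, div_le_iff₀ hc]; exact hexpcosh x
  have hs2 : Real.exp (α * |x|) * (Real.cosh (α * x))⁻¹ ^ 2 ≤ 4 * Real.exp (-(α * |x|)) := by
    have h1 : (Real.cosh (α * x))⁻¹ ≤ 2 * Real.exp (-(α * |x|)) := by
      rw [Real.exp_neg, ← div_eq_mul_inv, le_div_iff₀ (Real.exp_pos _)]; linarith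
    calc Real.exp (α * |x|) * (Real.cosh (α * x))⁻¹ ^ 2
        = (Real.exp (α * |x|) * (Real.cosh (α * x))⁻¹) * (Real.cosh (α * x))⁻¹ := by ring
      _ ≤ 2 * (2 * Real.exp (-(α * |x|))) := by gcongr
      _ = _ := by ring
  calc Real.exp (α * |x|) * |ρ t x|
      ≤ Real.exp (α * |x|) *
        (E * (ε * (Real.cosh (α * x))⁻¹ + D * (Real.cosh (α * x))⁻¹ ^ 2)) := by
        gcongr; exact hbound x
    _ = E * (ε * (Real.exp (α * |x|) * (Real.cosh (α * x))⁻¹)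
        + D * (Real.exp (α * |x|) * (Real.cosh (α * x))⁻¹ ^ 2)) := by ring
    _ ≤ E * (ε * 2 + D * (4 * Real.exp (-(α * |x|)))) := by gcongr
    _ = η / 2 + E * (D * (4 * Real.exp (-(α * |x|)))) := by
        rw [hεdef]; field_simp; ring
    _ < η := by linarith
end

section
/- Let c ∈ ℝ and let Z = (P,U,V), with P : ℝ → ℝ continuous and bounded and U, V : ℝ → ℝ twice continuously differentiable with bounded derivatives, satisfy the weak traveling-wave equations with speed c (equations (i)–(iii) of the traveling-wave lemma), so that z(t,x) := Z(x − ct) is a weak solution of the three-component Novikov system. Suppose z is in addition x-symmetric with a symmetry axis b ∈ C¹([0,∞)) satisfying ḃ(t₀) = c for some t₀ > 0. Then ∫_ℝ P(x)²·U(x)·ψ(x) dx = 0 and ∫_ℝ P(x)²·V(x)·ψ(x) dx = 0 for every ψ ∈ C_c^∞(ℝ); hence P²·U = 0 and P²·V = 0 almost everywhere. In particular, if U and V do not vanish simultaneously on any set of positive measure where P ≠ 0, then P = 0 almost everywhere, i.e. the traveling wave is not x-symmetric unless ρ ≡ 0. -/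
/-! The profile `(P, U, V)` is a fixed triple of continuous functions, so symmetry of the wave at a
single time `t₀` says that `P`, `U`, `V` are even about the point `b t₀ - c t₀` (`reflect_of_ae`).
Hence `U'`, `V'` are odd and `U''`, `V''` are even about that point. In the equation for `U`
with an even test function, the term `P² U ψ` is then the only even integrand: adding the equations for a test function
`ψ` and for its reflection cancels everything except `2 ∫ P² U ψ`
(`integral_even_part_eq_zero`). The equation for `V` is treated in the same way, and the
almost-everywhere claims follow from the fundamental lemma of the calculus of variations. -/

open MeasureTheory

/-- A weak solution of the three-component Novikov system on `[0,∞) × ℝ`: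
`ρ(t,·)` is continuous and bounded, `u(t,·), v(t,·)` are `C²` with bounded derivatives,
all are continuous in `t`, and the three weak (distributional) equations hold against
every smooth compactly supported test function `φ` on `[0,∞) × ℝ`. -/
def IsWeakSolution3NS (ρ u v : ℝ → ℝ → ℝ) : Prop :=
  (∀ t : ℝ, 0 ≤ t → Continuous (ρ t)) ∧
  (∀ t : ℝ, 0 ≤ t → ∃ Cb : ℝ, ∀ x : ℝ, |ρ t x| ≤ Cb) ∧
  (∀ t : ℝ, 0 ≤ t → ContDiff ℝ 2 (u t)) ∧
  (∀ t : ℝ, 0 ≤ t → ∃ Cb : ℝ, ∀ x : ℝ,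
    |u t x| + |deriv (u t) x| + |deriv (deriv (u t)) x| ≤ Cb) ∧
  (∀ t : ℝ, 0 ≤ t → ContDiff ℝ 2 (v t)) ∧
  (∀ t : ℝ, 0 ≤ t → ∃ Cb : ℝ, ∀ x : ℝ,
    |v t x| + |deriv (v t) x| + |deriv (deriv (v t)) x| ≤ Cb) ∧
  (∀ x : ℝ, ContinuousOn (fun t => ρ t x) (Set.Ici 0)) ∧
  (∀ x : ℝ, ContinuousOn (fun t => u t x) (Set.Ici 0)) ∧
  (∀ x : ℝ, ContinuousOn (fun t => v t x) (Set.Ici 0)) ∧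
  (∀ φ : ℝ → ℝ → ℝ, ContDiff ℝ (⊤ : ℕ∞) (Function.uncurry φ) →
    HasCompactSupport (Function.uncurry φ) →
    -- ⟨ρ, φ_t⟩ + ⟨ρuv, φ_x⟩ = 0
    ((∫ t in Set.Ioi (0:ℝ), ∫ x : ℝ, ρ t x * deriv (fun s => φ s x) t)
      + (∫ t in Set.Ioi (0:ℝ), ∫ x : ℝ, ρ t x * u t x * v t x * deriv (φ t) x) = 0) ∧
    -- ⟨u, (1−∂_x²)φ_t⟩ − ⟨4uvu_x + ρ²u − u·u_x·v_{xx}, φ⟩ + ⟨2u·u_x·v_x, φ_x⟩ + ⟨u·v·u_x, φ_{xx}⟩ = 0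
    ((∫ t in Set.Ioi (0:ℝ), ∫ x : ℝ, u t x *
        (deriv (fun s => φ s x) t - deriv (deriv (fun y => deriv (fun s => φ s y) t)) x))
      - (∫ t in Set.Ioi (0:ℝ), ∫ x : ℝ,
          (4 * u t x * v t x * deriv (u t) x + (ρ t x) ^ 2 * u t x
            - u t x * deriv (u t) x * deriv (deriv (v t)) x) * φ t x)
      + (∫ t in Set.Ioi (0:ℝ), ∫ x : ℝ,
          2 * u t x * deriv (u t) x * deriv (v t) x * deriv (φ t) x)
      + (∫ t in Set.Ioi (0:ℝ), ∫ x : ℝ,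
          u t x * v t x * deriv (u t) x * deriv (deriv (φ t)) x) = 0) ∧
    -- ⟨v, (1−∂_x²)φ_t⟩ − ⟨4uvv_x − ρ²v − u_{xx}·v·v_x, φ⟩ + ⟨2u_x·v·v_x, φ_x⟩ + ⟨u·v·v_x, φ_{xx}⟩ = 0
    ((∫ t in Set.Ioi (0:ℝ), ∫ x : ℝ, v t x *
        (deriv (fun s => φ s x) t - deriv (deriv (fun y => deriv (fun s => φ s y) t)) x))
      - (∫ t in Set.Ioi (0:ℝ), ∫ x : ℝ,
          (4 * u t x * v t x * deriv (v t) x - (ρ t x) ^ 2 * v t x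
            - deriv (deriv (u t)) x * v t x * deriv (v t) x) * φ t x)
      + (∫ t in Set.Ioi (0:ℝ), ∫ x : ℝ,
          2 * deriv (u t) x * v t x * deriv (v t) x * deriv (φ t) x)
      + (∫ t in Set.Ioi (0:ℝ), ∫ x : ℝ,
          u t x * v t x * deriv (v t) x * deriv (deriv (φ t)) x) = 0))

/-- The derivative of the reflected function `x ↦ f (r - x)`. -/
lemma deriv_reflect (f : ℝ → ℝ) (r : ℝ) :
    deriv (fun x => f (r - x)) = fun x => -deriv f (r - x) := by
  ext x
  exact deriv_comp_const_sub ..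

lemma deriv_reflect_of_even {f : ℝ → ℝ} {r : ℝ} (hf : ∀ x, f (r - x) = f x) (x : ℝ) :
    deriv f (r - x) = -deriv f x := by
  have h := congrFun (deriv_reflect f r) x
  rw [funext hf] at h
  linarith

lemma deriv_reflect_of_odd {f : ℝ → ℝ} {r : ℝ} (hf : ∀ x, f (r - x) = -f x) (x : ℝ) :
    deriv f (r - x) = deriv f x := by
  have h := congrFun (deriv_reflect f r) x
  rw [funext hf, deriv.fun_neg] at h
  linarith

/-- Parity extraction: if a third-order weak equation holds whose coefficients `A`, `B`, `E` are
even and `O`, `D` odd under the reflection `x ↦ r - x`, then `E` annihilates test functions: for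
an even `ψ`, the integrand `E ψ` is even while those of all other terms are odd. -/
lemma integral_even_part_eq_zero {A B D O E : ℝ → ℝ} {r : ℝ}
    (hA : ∀ x, A (r - x) = A x) (hB : ∀ x, B (r - x) = B x) (hD : ∀ x, D (r - x) = -D x)
    (hO : ∀ x, O (r - x) = -O x) (hE : ∀ x, E (r - x) = E x)
    (hOc : Continuous O) (hEc : Continuous E)
    (h : ∀ ψ : ℝ → ℝ, ContDiff ℝ (⊤ : ℕ∞) ψ → HasCompactSupport ψ →
      (∫ x : ℝ, A x * (deriv ψ x - deriv (deriv (deriv ψ)) x))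
        - (∫ x : ℝ, (O x + E x) * ψ x)
        + (∫ x : ℝ, B x * deriv ψ x)
        + (∫ x : ℝ, D x * deriv (deriv ψ) x) = 0)
    (ψ : ℝ → ℝ) (hψ : ContDiff ℝ (⊤ : ℕ∞) ψ) (hψc : HasCompactSupport ψ) :
    ∫ x : ℝ, E x * ψ x = 0 := by
  have h₁ := h ψ hψ hψc
  have h₂ := h (fun x => ψ (r - x)) (hψ.comp (contDiff_const.sub contDiff_id))
    (hψc.comp_homeomorph (Homeomorph.subLeft r))
  have d₁ := deriv_reflect ψ r
  have d₂ : deriv (deriv fun x => ψ (r - x)) = fun x => deriv (deriv ψ) (r - x) := by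
    rw [d₁, deriv.fun_neg', deriv_reflect]
    simp
  have d₃ : deriv (deriv (deriv fun x => ψ (r - x))) =
      fun x => -deriv (deriv (deriv ψ)) (r - x) := by
    rw [d₂, deriv_reflect]
  rw [d₃, d₂, d₁] at h₂
  have e₁ : (∫ x : ℝ, A x * (-deriv ψ (r - x) - -deriv (deriv (deriv ψ)) (r - x))) =
      -∫ x : ℝ, A x * (deriv ψ x - deriv (deriv (deriv ψ)) x) := by
    rw [← integral_sub_left_eq_self _ volume r, ← integral_neg]
    congr 1; ext x
    rw [hA, sub_sub_cancel]; ring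
  have e₂ : (∫ x : ℝ, (O x + E x) * ψ (r - x)) = ∫ x : ℝ, (-O x + E x) * ψ x := by
    rw [← integral_sub_left_eq_self _ volume r]
    congr 1; ext x
    rw [hO, hE, sub_sub_cancel]
  have e₃ : (∫ x : ℝ, B x * -deriv ψ (r - x)) = -∫ x : ℝ, B x * deriv ψ x := by
    rw [← integral_sub_left_eq_self _ volume r, ← integral_neg]
    congr 1; ext x
    rw [hB, sub_sub_cancel]; ring
  have e₄ : (∫ x : ℝ, D x * deriv (deriv ψ) (r - x)) =
      -∫ x : ℝ, D x * deriv (deriv ψ) x := by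
    rw [← integral_sub_left_eq_self _ volume r, ← integral_neg]
    congr 1; ext x
    rw [hD, sub_sub_cancel]; ring
  have i₁ : Integrable fun x => (O x + E x) * ψ x :=
    ((hOc.add hEc).mul hψ.continuous).integrable_of_hasCompactSupport hψc.mul_left
  have i₂ : Integrable fun x => (-O x + E x) * ψ x :=
    ((hOc.neg.add hEc).mul hψ.continuous).integrable_of_hasCompactSupport hψc.mul_left
  have e₅ : (∫ x : ℝ, (O x + E x) * ψ x) + (∫ x : ℝ, (-O x + E x) * ψ x) =
      2 * ∫ x : ℝ, E x * ψ x := by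
    rw [← integral_add i₁ i₂, ← integral_const_mul]
    congr 1; ext x; ring
  simp only [e₁, e₂, e₃, e₄] at h₂
  linarith

/-- The fundamental lemma of the calculus of variations for a continuous function. -/
lemma ae_eq_zero_of_integral_test {E : ℝ → ℝ} (hE : Continuous E)
    (h : ∀ ψ : ℝ → ℝ, ContDiff ℝ (⊤ : ℕ∞) ψ → HasCompactSupport ψ → ∫ x : ℝ, E x * ψ x = 0) :
    ∀ᵐ x : ℝ ∂volume, E x = 0 := by
  refine ae_eq_zero_of_integral_contDiff_smul_eq_zero hE.locallyIntegrable fun g hg hgc => ?_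
  simpa only [smul_eq_mul, mul_comm] using h g hg hgc

/-- A reflection identity that holds almost everywhere in the moving frame holds everywhere in the
profile variable, by continuity. -/
lemma reflect_of_ae {f : ℝ → ℝ} (hf : Continuous f) {s β : ℝ}
    (h : ∀ᵐ x : ℝ ∂volume, f (x - s) = f (2 * β - x - s)) (y : ℝ) :
    f (2 * β - 2 * s - y) = f y := by
  have h' : (fun x => f (x - s)) = fun x => f (2 * β - x - s) :=
    Continuous.ae_eq_iff_eq volume (by fun_prop) (by fun_prop) |>.1 h
  have h'' := congrFun h' (y + s)
  simp only [add_sub_cancel_right] at h''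
  rw [h'']; congr 1; ring

/-- An `x`-symmetric weak traveling wave of the three-component Novikov system must have
`P²·U = 0` and `P²·V = 0` a.e.; in particular `P = 0` a.e. unless `U` and `V` vanish
simultaneously on a set of positive measure where `P ≠ 0`. -/
theorem symmetric_traveling_wave_trivial (c : ℝ) (P U V : ℝ → ℝ)
    (hP : Continuous P) (hPb : ∃ Cb : ℝ, ∀ x : ℝ, |P x| ≤ Cb)
    (hU : ContDiff ℝ 2 U)
    (hUb : ∃ Cb : ℝ, ∀ x : ℝ, |U x| + |deriv U x| + |deriv (deriv U) x| ≤ Cb)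
    (hV : ContDiff ℝ 2 V)
    (hVb : ∃ Cb : ℝ, ∀ x : ℝ, |V x| + |deriv V x| + |deriv (deriv V) x| ≤ Cb)
    (hi : ∀ ψ : ℝ → ℝ, ContDiff ℝ (⊤ : ℕ∞) ψ → HasCompactSupport ψ →
      ∫ x : ℝ, (-c * P x + P x * U x * V x) * deriv ψ x = 0)
    (hii : ∀ ψ : ℝ → ℝ, ContDiff ℝ (⊤ : ℕ∞) ψ → HasCompactSupport ψ →
      (∫ x : ℝ, (-c * U x) * (deriv ψ x - deriv (deriv (deriv ψ)) x))
        - (∫ x : ℝ, (4 * U x * V x * deriv U x + (P x) ^ 2 * U x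
            - U x * deriv U x * deriv (deriv V) x) * ψ x)
        + (∫ x : ℝ, 2 * U x * deriv U x * deriv V x * deriv ψ x)
        + (∫ x : ℝ, U x * V x * deriv U x * deriv (deriv ψ) x) = 0)
    (hiii : ∀ ψ : ℝ → ℝ, ContDiff ℝ (⊤ : ℕ∞) ψ → HasCompactSupport ψ →
      (∫ x : ℝ, (-c * V x) * (deriv ψ x - deriv (deriv (deriv ψ)) x))
        - (∫ x : ℝ, (4 * U x * V x * deriv V x - (P x) ^ 2 * V x
            - deriv (deriv U) x * V x * deriv V x) * ψ x)
        + (∫ x : ℝ, 2 * deriv U x * V x * deriv V x * deriv ψ x)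
        + (∫ x : ℝ, U x * V x * deriv V x * deriv (deriv ψ) x) = 0)
    -- the traveling wave z(t,x) = Z(x − ct) is x-symmetric with axis b, and ḃ(t₀) = c
    (b : ℝ → ℝ) (hb : ContDiff ℝ 1 b)
    (hsym : ∀ t : ℝ, 0 ≤ t → ∀ᵐ x : ℝ ∂volume,
      P (x - c * t) = P (2 * b t - x - c * t) ∧
      U (x - c * t) = U (2 * b t - x - c * t) ∧
      V (x - c * t) = V (2 * b t - x - c * t))
    (t₀ : ℝ) (ht₀ : 0 < t₀) (hbt₀ : deriv b t₀ = c) :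
    (∀ ψ : ℝ → ℝ, ContDiff ℝ (⊤ : ℕ∞) ψ → HasCompactSupport ψ →
      (∫ x : ℝ, (P x) ^ 2 * U x * ψ x) = 0 ∧ (∫ x : ℝ, (P x) ^ 2 * V x * ψ x) = 0) ∧
    (∀ᵐ x : ℝ ∂volume, (P x) ^ 2 * U x = 0 ∧ (P x) ^ 2 * V x = 0) ∧
    ((∀ᵐ x : ℝ ∂volume, P x ≠ 0 → (U x ≠ 0 ∨ V x ≠ 0)) →
      ∀ᵐ x : ℝ ∂volume, P x = 0) := by
  have hsym₀ := hsym t₀ ht₀.le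
  obtain ⟨r, hPr, hUr, hVr⟩ : ∃ r : ℝ, (∀ x, P (r - x) = P x) ∧ (∀ x, U (r - x) = U x) ∧
      ∀ x, V (r - x) = V x :=
    ⟨2 * b t₀ - 2 * (c * t₀), reflect_of_ae hP (hsym₀.mono fun _ h => h.1),
      reflect_of_ae hU.continuous (hsym₀.mono fun _ h => h.2.1),
      reflect_of_ae hV.continuous (hsym₀.mono fun _ h => h.2.2)⟩
  have hU1 := deriv_reflect_of_even hUr
  have hV1 := deriv_reflect_of_even hVr
  have hU2 := deriv_reflect_of_odd hU1
  have hV2 := deriv_reflect_of_odd hV1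
  have cU := hU.continuous
  have cV := hV.continuous
  have hU' : ContDiff ℝ 1 (deriv U) := hU.deriv'
  have hV' : ContDiff ℝ 1 (deriv V) := hV.deriv'
  have cU1 := hU'.continuous
  have cV1 := hV'.continuous
  have cU2 : Continuous (deriv (deriv U)) := hU'.continuous_deriv le_rfl
  have cV2 : Continuous (deriv (deriv V)) := hV'.continuous_deriv le_rfl
  have kU : ∀ ψ : ℝ → ℝ, ContDiff ℝ (⊤ : ℕ∞) ψ → HasCompactSupport ψ →
      ∫ x : ℝ, (P x) ^ 2 * U x * ψ x = 0 := by
    refine integral_even_part_eq_zero (r := r) (A := fun x => -c * U x)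
      (B := fun x => 2 * U x * deriv U x * deriv V x)
      (D := fun x => U x * V x * deriv U x)
      (O := fun x => 4 * U x * V x * deriv U x - U x * deriv U x * deriv (deriv V) x)
      (E := fun x => (P x) ^ 2 * U x)
      ?_ ?_ ?_ ?_ ?_ (by fun_prop) (by fun_prop) fun ψ hψ hψc => ?_
    · intro x; simp only [hUr, hVr]
    · intro x; simp only [hUr, hVr, hU1, hV1]; ring
    · intro x; simp only [hUr, hVr, hU1, hV1]; ring
    · intro x; simp only [hUr, hVr, hU1, hV1, hV2]; ring
    · intro x; simp only [hPr, hUr, hVr]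
    have key := hii ψ hψ hψc
    simp only [add_sub_right_comm] at key ⊢
    exact key
  have kV' : ∀ ψ : ℝ → ℝ, ContDiff ℝ (⊤ : ℕ∞) ψ → HasCompactSupport ψ →
      ∫ x : ℝ, (-((P x) ^ 2 * V x)) * ψ x = 0 := by
    refine integral_even_part_eq_zero (r := r) (A := fun x => -c * V x)
      (B := fun x => 2 * deriv U x * V x * deriv V x)
      (D := fun x => U x * V x * deriv V x)
      (O := fun x => 4 * U x * V x * deriv V x - deriv (deriv U) x * V x * deriv V x)
      (E := fun x => -((P x) ^ 2 * V x))
      ?_ ?_ ?_ ?_ ?_ (by fun_prop) (by fun_prop) fun ψ hψ hψc => ?_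
    · intro x; simp only [hUr, hVr]
    · intro x; simp only [hUr, hVr, hU1, hV1]; ring
    · intro x; simp only [hUr, hVr, hU1, hV1]; ring
    · intro x; simp only [hUr, hVr, hU1, hV1, hU2]; ring
    · intro x; simp only [hPr, hUr, hVr]
    have key := hiii ψ hψ hψc
    simp only [← sub_eq_add_neg, sub_right_comm] at key ⊢
    exact key
  have kV : ∀ ψ : ℝ → ℝ, ContDiff ℝ (⊤ : ℕ∞) ψ → HasCompactSupport ψ →
      ∫ x : ℝ, (P x) ^ 2 * V x * ψ x = 0 := fun ψ hψ hψc => by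
    simpa only [neg_mul, integral_neg, neg_eq_zero] using kV' ψ hψ hψc
  have hae : ∀ᵐ x : ℝ ∂volume, (P x) ^ 2 * U x = 0 ∧ (P x) ^ 2 * V x = 0 :=
    (ae_eq_zero_of_integral_test (by fun_prop) kU).and
      (ae_eq_zero_of_integral_test (by fun_prop) kV)
  refine ⟨fun ψ hψ hψc => ⟨kU ψ hψ hψc, kV ψ hψ hψc⟩, hae, fun hne => ?_⟩
  filter_upwards [hae, hne] with x hx hn
  by_contra hPx
  rcases hn hPx with h | h
  · exact mul_ne_zero (pow_ne_zero 2 hPx) h hx.1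
  · exact mul_ne_zero (pow_ne_zero 2 hPx) h hx.2
end
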